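/- Let Δ be a convex lattice polygon with boundary data β, and let γ be a λ-increasing lattice path of length n from p to q contained in Δ that is not β₊-initial. Let k be ANY index with 0 < k < n at which γ makes a left turn, i.e. det(γ(k)−γ(k−1), γ(k+1)−γ(k)) > 0. Let γ′ be the path obtained from γ by deleting the point γ(k), let γ″ be the path obtained by replacing γ(k) with γ(k−1)+γ(k+1)−γ(k), and let T be the triangle with vertices γ(k−1), γ(k), γ(k+1). Then mult₊(γ) = 2·Area(T)·mult₊(γ′) + mult₊(γ″), where the last term is taken to be 0 if γ″ is not contained in Δ. In other words, the positive multiplicity of a lattice path stays the same if at each step of the recursion any left turn is used, not necessarily the first one. -/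

import Mathlib

open Classical

noncomputable section

namespace TropPaths

/-- Lattice points of the plane. -/
abbrev Pt := ℤ × ℤ

/-- The order on `ℤ²` induced by `λ(x,y) = x - εy` for a small irrational `ε > 0`:
`p ≺ q` iff `p₁ < q₁`, or (`p₁ = q₁` and `p₂ > q₂`). -/
def lamLT (p q : Pt) : Prop := p.1 < q.1 ∨ (p.1 = q.1 ∧ q.2 < p.2)

/-- A lattice path, recorded as the list of its points, is `λ`-increasing. -/
def Increasing (γ : List Pt) : Prop := List.Chain' lamLT γ

/-- The determinant of two vectors in `ℤ²`. -/
def det (u v : Pt) : ℤ := u.1 * v.2 - u.2 * v.1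

/-- The `k`-th point of a path (junk value out of range). -/
def pt (γ : List Pt) (k : ℕ) : Pt := γ.getD k (0, 0)

/-- The `k`-th step vector of a path. -/
def stepAt (γ : List Pt) (k : ℕ) : Pt := pt γ (k + 1) - pt γ k

/-- The list of all step vectors of a path. -/
def steps (γ : List Pt) : List Pt := List.zipWith (fun a b => b - a) γ γ.tail

/-- The multiset of down steps `(0,-s)`, `s > 0`, of a path. -/
def downSteps (γ : List Pt) : Multiset Pt :=
  Multiset.filter (fun v => v.1 = 0 ∧ v.2 < 0) (steps γ : Multiset Pt)

/-- The multiset of up-right steps of a path. -/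
def upRightSteps (γ : List Pt) : Multiset Pt :=
  Multiset.filter (fun v => 0 < v.1 ∧ 0 < v.2) (steps γ : Multiset Pt)

/-- The path makes a turn of sign `s` at the (interior) index `k`; for left turns
`s = (0 < ·)`, for right turns `s = (· < 0)`. -/
def TurnAt (s : ℤ → Prop) (γ : List Pt) (k : ℕ) : Prop :=
  0 < k ∧ k + 1 < γ.length ∧ s (det (pt γ k - pt γ (k - 1)) (pt γ (k + 1) - pt γ k))

/-- `k` is the first turn of sign `s` of the path. -/
def FirstTurn (s : ℤ → Prop) (γ : List Pt) (k : ℕ) : Prop :=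
  TurnAt s γ k ∧ ∀ j, TurnAt s γ j → k ≤ j

/-- Twice the area of the triangle with vertices `γ(k-1), γ(k), γ(k+1)`. -/
def triArea2 (γ : List Pt) (k : ℕ) : ℕ :=
  (det (pt γ k - pt γ (k - 1)) (pt γ (k + 1) - pt γ k)).natAbs

/-- The path obtained by cutting the corner at index `k`, i.e. deleting the point `γ(k)`. -/
def cut (γ : List Pt) (k : ℕ) : List Pt := γ.eraseIdx k

/-- The path obtained by completing the parallelogram at index `k`, i.e. replacing
`γ(k)` by `γ(k-1) + γ(k+1) - γ(k)`. -/
def push (γ : List Pt) (k : ℕ) : List Pt :=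
  γ.set k (pt γ (k - 1) + pt γ (k + 1) - pt γ k)

/-- All points of the path lie in `Δ`. -/
def Inside (Δ : Set Pt) (γ : List Pt) : Prop := ∀ z ∈ γ, z ∈ Δ

/-- Mikhalkin's multiplicity recursion, as a functional relation: `MultRel Δ Init s γ m`
means that the recursion (performed always at the *first* turn of sign `s`) assigns the
multiplicity `m` to the path `γ`.  Here `Δ` is the set of lattice points of the polygon,
`Init` the set of initial paths (of multiplicity `1`), and `s` the turn sign
(`0 < ·` for left turns / `mult₊`, `· < 0` for right turns / `mult₋`). -/
inductive MultRel (Δ : Set Pt) (Init : List Pt → Prop) (s : ℤ → Prop) : List Pt → ℕ → Prop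
  | init {γ : List Pt} : Init γ → MultRel Δ Init s γ 1
  | noTurn {γ : List Pt} : ¬Init γ → (∀ k, ¬TurnAt s γ k) → MultRel Δ Init s γ 0
  | stepIn {γ : List Pt} {k m' m'' : ℕ} : ¬Init γ → FirstTurn s γ k →
      Inside Δ (push γ k) → MultRel Δ Init s (cut γ k) m' →
      MultRel Δ Init s (push γ k) m'' →
      MultRel Δ Init s γ (triArea2 γ k * m' + m'')
  | stepOut {γ : List Pt} {k m' : ℕ} : ¬Init γ → FirstTurn s γ k →
      ¬Inside Δ (push γ k) → MultRel Δ Init s (cut γ k) m' →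
      MultRel Δ Init s γ (triArea2 γ k * m')

/-- The multiplicity function determined by Mikhalkin's recursion. -/
def multOf (Δ : Set Pt) (Init : List Pt → Prop) (s : ℤ → Prop) (γ : List Pt) : ℕ :=
  if h : ∃ m, MultRel Δ Init s γ m then h.choose else 0

/-- `γ ≺ δ`: the path `δ` is obtained from `γ` by finitely many steps of the multiplicity
recursion (each step cuts the corner at the first turn of sign `s`, or completes the
parallelogram there). -/
inductive Reaches (Δ : Set Pt) (Init : List Pt → Prop) (s : ℤ → Prop) : List Pt → List Pt → Prop
  | refl (γ : List Pt) : Reaches Δ Init s γ γ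
  | cutStep {γ δ : List Pt} {k : ℕ} : ¬Init γ → FirstTurn s γ k →
      Reaches Δ Init s (cut γ k) δ → Reaches Δ Init s γ δ
  | pushStep {γ δ : List Pt} {k : ℕ} : ¬Init γ → FirstTurn s γ k →
      Inside Δ (push γ k) → Reaches Δ Init s (push γ k) δ → Reaches Δ Init s γ δ

/-- The lattice path starting at `p` with the given list of step vectors. -/
def pathFrom : Pt → List Pt → List Pt
  | p, [] => [p]
  | p, v :: vs => p :: pathFrom (p + v) vs

/-- Horizontal (rightward) steps of the given sizes. -/
def hSteps (l : List ℕ) : List Pt := l.map fun k => ((k : ℤ), 0)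

/-- Vertical downward steps of the given sizes. -/
def dSteps (l : List ℕ) : List Pt := l.map fun k => ((0 : ℤ), -(k : ℤ))

/-- A multiset of positive integers is a partition of `t`. -/
def IsPartition (m : Multiset ℕ) (t : ℕ) : Prop := (∀ k ∈ m, 0 < k) ∧ m.sum = t

/-! ## The rectangle `[0,c] × [0,d]` -/

/-- The lattice points of the rectangle with vertices `(0,0), (c,0), (0,d), (c,d)`. -/
def rect (c d : ℕ) : Set Pt := {z | 0 ≤ z.1 ∧ z.1 ≤ (c : ℤ) ∧ 0 ≤ z.2 ∧ z.2 ≤ (d : ℤ)}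

/-- `β₊`-initial paths of the rectangle: from `p = (0,d)` clockwise along the top edge with
step sizes the parts of `μ₂` and then down the right edge with step sizes the parts of `ν₂`. -/
def InitPlusRect (d : ℕ) (μ₂ ν₂ : Multiset ℕ) (γ : List Pt) : Prop :=
  ∃ s t : List ℕ, (s : Multiset ℕ) = μ₂ ∧ (t : Multiset ℕ) = ν₂ ∧
    γ = pathFrom (0, (d : ℤ)) (hSteps s ++ dSteps t)

/-- `β₋`-initial paths of the rectangle: from `p = (0,d)` counterclockwise down the left edge
with step sizes the parts of `ν₁` and then along the bottom edge with step sizes the parts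
of `μ₁`. -/
def InitMinusRect (d : ℕ) (μ₁ ν₁ : Multiset ℕ) (γ : List Pt) : Prop :=
  ∃ s t : List ℕ, (s : Multiset ℕ) = ν₁ ∧ (t : Multiset ℕ) = μ₁ ∧
    γ = pathFrom (0, (d : ℤ)) (dSteps s ++ hSteps t)

/-- `mult₊` for the rectangle with boundary data `(μ₁, μ₂, ν₁, ν₂)`. -/
def multPlusRect (c d : ℕ) (μ₂ ν₂ : Multiset ℕ) : List Pt → ℕ :=
  multOf (rect c d) (InitPlusRect d μ₂ ν₂) (fun x => 0 < x)

/-- `mult₋` for the rectangle with boundary data `(μ₁, μ₂, ν₁, ν₂)`. -/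
def multMinusRect (c d : ℕ) (μ₁ ν₁ : Multiset ℕ) : List Pt → ℕ :=
  multOf (rect c d) (InitMinusRect d μ₁ ν₁) (fun x => x < 0)

/-- `mult = mult₊ · mult₋` for the rectangle with boundary data `(μ₁, μ₂, ν₁, ν₂)`. -/
def multRect (c d : ℕ) (μ₁ μ₂ ν₁ ν₂ : Multiset ℕ) (γ : List Pt) : ℕ :=
  multPlusRect c d μ₂ ν₂ γ * multMinusRect c d μ₁ ν₁ γ

/-- A `λ`-increasing lattice path from `(0,d)` to `(c,0)` contained in the rectangle. -/
def IsPathRect (c d : ℕ) (γ : List Pt) : Prop :=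
  Increasing γ ∧ γ.head? = some (0, (d : ℤ)) ∧ γ.getLast? = some ((c : ℤ), 0) ∧
    Inside (rect c d) γ

/-- The genericity condition: all subset sums of the `xᵢ` are distinct. -/
def Generic {n : ℕ} (x : Fin n → ℕ) : Prop :=
  ∀ I J : Finset (Fin n), I ≠ J → ∑ i ∈ I, x i ≠ ∑ j ∈ J, x j

/-! ## General convex lattice polygons with boundary data -/

/-- The displacement vector of an edge: (lattice length of the edge) times the primitive
direction.  An edge is recorded as a pair (primitive direction, multiset of step lengths
`β_e`, listing each length `k` with multiplicity `β_e(k)`). -/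
def edgeVec (e : Pt × Multiset ℕ) : Pt := ((e.2.sum : ℤ) * e.1.1, (e.2.sum : ℤ) * e.1.2)

/-- The endpoint of a chain of edges starting at `p`. -/
def chainEnd (p : Pt) (l : List (Pt × Multiset ℕ)) : Pt := p + (l.map edgeVec).sum

/-- The successive vertices of a chain of edges starting at `p`. -/
def chainPts : Pt → List (Pt × Multiset ℕ) → List Pt
  | p, [] => [p]
  | p, e :: es => p :: chainPts (p + edgeVec e) es

/-- A convex lattice polygon together with boundary data `β`: it is encoded by its
`λ`-minimal vertex `p`, and its two boundary chains from `p` to the `λ`-maximal vertex `q`,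
the clockwise one `cw` and the counterclockwise one `ccw`.  Each edge carries its primitive
direction and the multiset of step lengths `β_e` (which must sum to the lattice length of
the edge; here the lattice length is *defined* as that sum). -/
structure PolyData where
  /-- the `λ`-minimal vertex -/
  p : Pt
  /-- the clockwise boundary chain from `p` to `q` -/
  cw : List (Pt × Multiset ℕ)
  /-- the counterclockwise boundary chain from `p` to `q` -/
  ccw : List (Pt × Multiset ℕ)
  cw_ne : cw ≠ []
  ccw_ne : ccw ≠ []
  /-- all edge directions are `λ`-positive -/
  cw_lam : ∀ e ∈ cw, lamLT (0, 0) e.1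
  ccw_lam : ∀ e ∈ ccw, lamLT (0, 0) e.1
  /-- edge directions are primitive -/
  cw_prim : ∀ e ∈ cw, Int.gcd e.1.1 e.1.2 = 1
  ccw_prim : ∀ e ∈ ccw, Int.gcd e.1.1 e.1.2 = 1
  /-- the step lengths on each edge are positive, and each edge has positive lattice length -/
  cw_pos : ∀ e ∈ cw, e.2 ≠ 0 ∧ ∀ k ∈ e.2, 0 < k
  ccw_pos : ∀ e ∈ ccw, e.2 ≠ 0 ∧ ∀ k ∈ e.2, 0 < k
  /-- strict convexity: consecutive clockwise edges turn right -/
  cw_conv : (cw.map Prod.fst).Chain' fun u v => det u v < 0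
  /-- strict convexity: consecutive counterclockwise edges turn left -/
  ccw_conv : (ccw.map Prod.fst).Chain' fun u v => 0 < det u v
  /-- the two chains have common endpoint `q` -/
  closes : chainEnd p cw = chainEnd p ccw
  /-- convexity at the vertex `p` -/
  junct_p : ∀ u w : Pt, (cw.map Prod.fst).head? = some u →
    (ccw.map Prod.fst).head? = some w → 0 < det w u
  /-- convexity at the vertex `q` -/
  junct_q : ∀ u w : Pt, (cw.map Prod.fst).getLast? = some u →
    (ccw.map Prod.fst).getLast? = some w → 0 < det u w

/-- The `λ`-maximal vertex of the polygon. -/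
def PolyData.q (P : PolyData) : Pt := chainEnd P.p P.ccw

/-- The canonical embedding `ℤ² → ℝ²`. -/
def toR (z : Pt) : ℝ × ℝ := ((z.1 : ℝ), (z.2 : ℝ))

/-- The set of lattice points of the polygon: all lattice points of the convex hull of the
boundary vertices. -/
def polySet (P : PolyData) : Set Pt :=
  {z | toR z ∈ convexHull ℝ
    (toR '' {w | w ∈ chainPts P.p P.cw ∨ w ∈ chainPts P.p P.ccw})}

/-- `ExpandChain chain s` holds if the list of step vectors `s` traverses the edges of
`chain` in order, taking on each edge `e` exactly `β_e(k)` steps of lattice length `k`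
(in some order). -/
def ExpandChain : List (Pt × Multiset ℕ) → List Pt → Prop
  | [], s => s = []
  | e :: es, s => ∃ (l : List ℕ) (r : List Pt), (l : Multiset ℕ) = e.2 ∧ ExpandChain es r ∧
      s = (l.map fun k => ((k : ℤ) * e.1.1, (k : ℤ) * e.1.2)) ++ r

/-- The initial paths determined by a boundary chain: the paths from `p` to `q` along the
chain whose steps on each edge `e` realize the data `β_e`. -/
def InitChain (p : Pt) (chain : List (Pt × Multiset ℕ)) (γ : List Pt) : Prop :=
  ∃ s, ExpandChain chain s ∧ γ = pathFrom p s

/-- `mult₋` of a path in the polygon `P`. -/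
def multMinusP (P : PolyData) : List Pt → ℕ :=
  multOf (polySet P) (InitChain P.p P.ccw) (fun x => x < 0)

/-- `mult₊` of a path in the polygon `P`. -/
def multPlusP (P : PolyData) : List Pt → ℕ :=
  multOf (polySet P) (InitChain P.p P.cw) (fun x => 0 < x)

/-! ## Proof -/

/-- left-turn sign -/
abbrev sg : ℤ → Prop := fun x => 0 < x

theorem get2 (A B : List Pt) (x y z : Pt) :
    (A ++ x :: y :: z :: B)[A.length + 1 + 1]? = some z := by
  simp [add_assoc]

theorem turnAt_mk (s : ℤ → Prop) (A B : List Pt) (x y z : Pt) (h : s (det (y - x) (z - y))) :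
    TurnAt s (A ++ x :: y :: z :: B) (A.length + 1) := by
  refine ⟨by omega, by simp; omega, ?_⟩
  simpa [pt, List.getD, get2] using h

theorem turnAt_split {s : ℤ → Prop} {γ : List Pt} {k : ℕ} (h : TurnAt s γ k) :
    ∃ A x y z B, γ = A ++ x :: y :: z :: B ∧ k = A.length + 1 ∧ s (det (y - x) (z - y)) := by
  obtain ⟨h0, h1, h2⟩ := h
  obtain ⟨j, rfl⟩ : ∃ j, k = j + 1 := ⟨k - 1, by omega⟩
  have e : γ = γ.take j ++ γ[j] :: γ[j+1] :: γ[j+2] :: γ.drop (j+3) := by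
    rw [← List.drop_eq_getElem_cons, ← List.drop_eq_getElem_cons, ← List.drop_eq_getElem_cons,
      List.take_append_drop]
  refine ⟨_, _, _, _, _, e, by simp; omega, ?_⟩
  have a0 : γ[j]? = some γ[j] := List.getElem?_eq_getElem (by omega)
  have a1 : γ[j+1]? = some γ[j+1] := List.getElem?_eq_getElem (by omega)
  have a2 : γ[j+1+1]? = some γ[j+2] := List.getElem?_eq_getElem (by omega)
  simpa [pt, List.getD, a0, a1, a2] using h2

theorem cut_mk (A B : List Pt) (x y z : Pt) :
    cut (A ++ x :: y :: z :: B) (A.length + 1) = A ++ x :: z :: B := by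
  simp [cut, List.eraseIdx_append_of_length_le]

theorem push_mk (A B : List Pt) (x y z : Pt) :
    push (A ++ x :: y :: z :: B) (A.length + 1) = A ++ x :: (x + z - y) :: z :: B := by
  simp [push, pt, List.getD, get2]

theorem tri_mk (A B : List Pt) (x y z : Pt) :
    triArea2 (A ++ x :: y :: z :: B) (A.length + 1) = (det (y - x) (z - y)).natAbs := by
  simp [triArea2, pt, List.getD, get2]

/-! ### Inversions -/

def cnt (v : Pt) : Pt → List Pt → ℕ
  | _, [] => 0
  | x, y :: l => (if 0 < det v (y - x) then 1 else 0) + cnt v y l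

def inv : Pt → List Pt → ℕ
  | _, [] => 0
  | x, y :: l => cnt (y - x) y l + inv y l

def mu (γ : List Pt) : ℕ := inv 0 γ

theorem cnt_cut (v : Pt) (B : List Pt) (x y z : Pt) : ∀ (A : List Pt) (o : Pt),
    cnt v o (A ++ x :: z :: B) ≤ cnt v o (A ++ x :: y :: z :: B)
  | [], o => by
    have : det v (z - x) = det v (y - x) + det v (z - y) := by simp [det]; ring
    simp only [List.nil_append, cnt]
    split_ifs <;> first | omega
  | a :: A, o => by
    have := cnt_cut v B x y z A a
    simp only [List.cons_append, cnt]; omega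

theorem cnt_push (v : Pt) (B : List Pt) (x y z : Pt) : ∀ (A : List Pt) (o : Pt),
    cnt v o (A ++ x :: (x + z - y) :: z :: B) = cnt v o (A ++ x :: y :: z :: B)
  | [], o => by
    have h1 : x + z - y - x = z - y := by abel
    have h2 : z - (x + z - y) = y - x := by abel
    simp only [List.nil_append, cnt, h1, h2]; omega
  | a :: A, o => by
    have := cnt_push v B x y z A a
    simp only [List.cons_append, cnt]; omega

theorem det_neg_comm (u v : Pt) : det v u = - det u v := by simp [det]; ring

theorem cnt_add (u v w : Pt) (h : w = u + v) : ∀ (l : List Pt) (o : Pt),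
    cnt w o l ≤ cnt u o l + cnt v o l
  | [], o => by simp [cnt]
  | a :: l, o => by
    have := cnt_add u v w h l a
    have : det w (a - o) = det u (a - o) + det v (a - o) := by subst h; simp [det]; ring
    simp only [cnt]; split_ifs <;> omega

theorem inv_cut (B : List Pt) (x y z : Pt) (h : 0 < det (y - x) (z - y)) :
    ∀ (A : List Pt) (o : Pt),
    inv o (A ++ x :: z :: B) < inv o (A ++ x :: y :: z :: B)
  | [], o => by
    have := cnt_add (y - x) (z - y) (z - x) (by abel) B z
    have := cnt_cut (x - o) B x y z [] x
    simp only [List.nil_append, inv, cnt, if_pos h] at *; 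
    have : det (x - o) (z - x) = det (x - o) (y - x) + det (x - o) (z - y) := by simp [det]; ring
    split_ifs <;> omega
  | a :: A, o => by
    have := inv_cut B x y z h A a
    have := cnt_cut (a - o) B x y z A a
    simp only [List.cons_append, inv]; omega

theorem inv_push (B : List Pt) (x y z : Pt) (h : 0 < det (y - x) (z - y)) :
    ∀ (A : List Pt) (o : Pt),
    inv o (A ++ x :: (x + z - y) :: z :: B) < inv o (A ++ x :: y :: z :: B)
  | [], o => by
    have h1 : x + z - y - x = z - y := by abel
    have h2 : z - (x + z - y) = y - x := by abel
    have h3 := det_neg_comm (y - x) (z - y)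
    simp only [List.nil_append, inv, cnt, if_pos h, h1, h2] at *
    rw [if_neg (by omega : ¬ 0 < det (z - y) (y - x))]; omega
  | a :: A, o => by
    have := inv_push B x y z h A a
    have := cnt_push (a - o) B x y z A a
    simp only [List.cons_append, inv]; omega

theorem inv_swap (B : List Pt) (x y z : Pt) (h : det (y - x) (z - y) = 0) :
    ∀ (A : List Pt) (o : Pt),
    inv o (A ++ x :: (x + z - y) :: z :: B) = inv o (A ++ x :: y :: z :: B)
  | [], o => by
    have h1 : x + z - y - x = z - y := by abel
    have h2 : z - (x + z - y) = y - x := by abel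
    have h3 := det_neg_comm (y - x) (z - y)
    simp only [List.nil_append, inv, cnt, h1, h2] at *
    rw [if_neg (by omega : ¬ 0 < det (z - y) (y - x)),
      if_neg (by omega : ¬ 0 < det (y - x) (z - y))]; omega
  | a :: A, o => by
    have := inv_swap B x y z h A a
    have := cnt_push (a - o) B x y z A a
    simp only [List.cons_append, inv]; omega

/-! ### Increasing paths -/

theorem lamLT_trans {x y z : Pt} (h : lamLT x y) (h' : lamLT y z) : lamLT x z := by
  simp only [lamLT] at *; omega

theorem inc_iff (A L : List Pt) (x y : Pt) : Increasing (A ++ x :: y :: L) ↔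
    Increasing (A ++ [x]) ∧ lamLT x y ∧ Increasing (y :: L) := by
  unfold Increasing List.Chain'
  rw [List.isChain_split, List.isChain_cons_cons]

theorem inc_cons (L : List Pt) (x y : Pt) : Increasing (x :: y :: L) ↔
    lamLT x y ∧ Increasing (y :: L) := by
  unfold Increasing List.Chain'
  rw [List.isChain_cons_cons]

theorem inc_cut {A B : List Pt} {x y z : Pt} (h : Increasing (A ++ x :: y :: z :: B)) :
    Increasing (A ++ x :: z :: B) := by
  simp only [inc_iff, inc_cons] at *
  exact ⟨h.1, lamLT_trans h.2.1 h.2.2.1, h.2.2.2⟩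

theorem inc_push {A B : List Pt} {x y z : Pt} (h : Increasing (A ++ x :: y :: z :: B)) :
    Increasing (A ++ x :: (x + z - y) :: z :: B) := by
  simp only [inc_iff, inc_cons] at *
  refine ⟨h.1, ?_, ?_, h.2.2.2⟩
  · have := h.2.2.1
    simp only [lamLT, Prod.fst_add, Prod.fst_sub, Prod.snd_add, Prod.snd_sub] at *; omega
  · have := h.2.1
    simp only [lamLT, Prod.fst_add, Prod.fst_sub, Prod.snd_add, Prod.snd_sub] at *; omega

/-! ### The multiplicity function -/

section mult
variable {Δ : Set Pt} {Init : List Pt → Prop}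

theorem firstTurn_exists {s : ℤ → Prop} {γ : List Pt} (h : ∃ k, TurnAt s γ k) :
    ∃ k, FirstTurn s γ k :=
  ⟨Nat.find h, Nat.find_spec h, fun _ hj => Nat.find_min' h hj⟩

theorem firstTurn_unique {s : ℤ → Prop} {γ : List Pt} {k l : ℕ} (h : FirstTurn s γ k)
    (h' : FirstTurn s γ l) : k = l := le_antisymm (h.2 _ h'.1) (h'.2 _ h.1)

theorem multRel_unique {s : ℤ → Prop} {γ : List Pt} {m : ℕ} (h : MultRel Δ Init s γ m) :
    ∀ m', MultRel Δ Init s γ m' → m = m' := by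
  induction h with
  | init hi => 
    intro m' h'
    cases h' <;> first | rfl | contradiction
  | noTurn hi ht =>
    intro m' h'
    cases h' with
    | init => contradiction
    | noTurn => rfl
    | stepIn _ hf => exact absurd hf.1 (ht _)
    | stepOut _ hf => exact absurd hf.1 (ht _)
  | stepIn hi hf hin h1 h2 ih1 ih2 =>
    intro m' h'
    cases h' with
    | init => contradiction
    | noTurn _ ht => exact absurd hf.1 (ht _)
    | stepIn _ hf' _ h1' h2' =>
      obtain rfl := firstTurn_unique hf hf'
      rw [ih1 _ h1', ih2 _ h2']
    | stepOut _ hf' hin' =>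
      obtain rfl := firstTurn_unique hf hf'
      contradiction
  | stepOut hi hf hin h1 ih1 =>
    intro m' h'
    cases h' with
    | init => contradiction
    | noTurn _ ht => exact absurd hf.1 (ht _)
    | stepIn _ hf' hin' =>
      obtain rfl := firstTurn_unique hf hf'
      contradiction
    | stepOut _ hf' _ h1' =>
      obtain rfl := firstTurn_unique hf hf'
      rw [ih1 _ h1']

theorem multRel_exists (n : ℕ) : ∀ γ : List Pt, mu γ < n → ∃ m, MultRel Δ Init sg γ m := by
  induction n with
  | zero => intro γ h; omega
  | succ n ih =>
    intro γ hγ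
    by_cases hi : Init γ
    · exact ⟨_, .init hi⟩
    by_cases ht : ∃ k, TurnAt sg γ k
    · obtain ⟨k, hk⟩ := firstTurn_exists ht
      obtain ⟨A, x, y, z, B, e, ek, hd⟩ := turnAt_split hk.1
      have h1 : mu (cut γ k) < mu γ := by
        subst e ek; rw [cut_mk]; exact inv_cut B x y z hd A 0
      have h2 : mu (push γ k) < mu γ := by
        subst e ek; rw [push_mk]; exact inv_push B x y z hd A 0
      obtain ⟨m1, hm1⟩ := ih (cut γ k) (by omega)
      obtain ⟨m2, hm2⟩ := ih (push γ k) (by omega)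
      by_cases hin : Inside Δ (push γ k)
      · exact ⟨_, .stepIn hi hk hin hm1 hm2⟩
      · exact ⟨_, .stepOut hi hk hin hm1⟩
    · push Not at ht
      exact ⟨_, .noTurn hi ht⟩

theorem multOf_spec (γ : List Pt) : MultRel Δ Init sg γ (multOf Δ Init sg γ) := by
  have h : ∃ m, MultRel Δ Init sg γ m := multRel_exists _ γ (Nat.lt_succ_self _)
  unfold multOf
  rw [dif_pos h]; exact h.choose_spec

theorem multOf_eq {γ : List Pt} {m : ℕ} (h : MultRel Δ Init sg γ m) : multOf Δ Init sg γ = m :=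
  multRel_unique (multOf_spec γ) _ h

theorem multOf_first {γ : List Pt} {k : ℕ} (hi : ¬ Init γ) (hk : FirstTurn sg γ k) :
    multOf Δ Init sg γ = triArea2 γ k * multOf Δ Init sg (cut γ k) +
      (if Inside Δ (push γ k) then multOf Δ Init sg (push γ k) else 0) := by
  split_ifs with h
  · exact multOf_eq (.stepIn hi hk h (multOf_spec _) (multOf_spec _))
  · exact multOf_eq (.stepOut hi hk h (multOf_spec _))

variable (Δ Init) in
/-- The multiplicity, set to zero for paths leaving `Δ`. -/
def N (γ : List Pt) : ℤ := if Inside Δ γ then (multOf Δ Init sg γ : ℤ) else 0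

end mult

/-! ### Moves -/

/-- `Mv γ d y γ₁ γ₂`: at the interior point `y` of `γ`, with determinant `d`, cutting gives `γ₁`
and completing the parallelogram gives `γ₂`. -/
inductive Mv : List Pt → ℤ → Pt → List Pt → List Pt → Prop
  | mk (A B : List Pt) (x y z : Pt) : Mv (A ++ x :: y :: z :: B) (det (y - x) (z - y)) y
      (A ++ x :: z :: B) (A ++ x :: (x + z - y) :: z :: B)

theorem Mv.of {γ γ₁ γ₂ : List Pt} {d : ℤ} {y : Pt} (A B : List Pt) (x z y' : Pt)
    (h : γ = A ++ x :: y :: z :: B) (h1 : γ₁ = A ++ x :: z :: B)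
    (h2 : γ₂ = A ++ x :: y' :: z :: B) (hd : d = det (y - x) (z - y)) (hy : y' = x + z - y) :
    Mv γ d y γ₁ γ₂ := by
  subst h h1 h2 hd hy; exact Mv.mk A B x y z

theorem Mv.inc₁ {γ γ₁ γ₂ : List Pt} {d : ℤ} {y : Pt} (h : Mv γ d y γ₁ γ₂) (hi : Increasing γ) :
    Increasing γ₁ := by
  cases h; exact inc_cut hi

theorem Mv.inc₂ {γ γ₁ γ₂ : List Pt} {d : ℤ} {y : Pt} (h : Mv γ d y γ₁ γ₂) (hi : Increasing γ) :
    Increasing γ₂ := by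
  cases h; exact inc_push hi

theorem Mv.mu₁ {γ γ₁ γ₂ : List Pt} {d : ℤ} {y : Pt} (h : Mv γ d y γ₁ γ₂) (hd : 0 < d) :
    mu γ₁ < mu γ := by
  cases h; exact inv_cut _ _ _ _ hd _ _

theorem Mv.mu₂ {γ γ₁ γ₂ : List Pt} {d : ℤ} {y : Pt} (h : Mv γ d y γ₁ γ₂) (hd : 0 < d) :
    mu γ₂ < mu γ := by
  cases h; exact inv_push _ _ _ _ hd _ _

theorem Mv.mu₀ {γ γ₁ γ₂ : List Pt} {d : ℤ} {y : Pt} (h : Mv γ d y γ₁ γ₂) (hd : d = 0) :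
    mu γ₂ = mu γ := by
  cases h; exact inv_swap _ _ _ _ hd _ _

theorem Mv.inside_iff {Δ : Set Pt} {γ γ₁ γ₂ : List Pt} {d : ℤ} {y : Pt} (h : Mv γ d y γ₁ γ₂) :
    Inside Δ γ ↔ Inside Δ γ₁ ∧ y ∈ Δ := by
  cases h
  simp only [Inside, List.mem_append, List.mem_cons]
  constructor
  · intro h
    exact ⟨fun z hz => h z (by tauto), h y (by tauto)⟩
  · rintro ⟨h, hy⟩ z hz
    by_cases e : z = y
    · rwa [e]
    · exact h z (by tauto)

theorem Mv.inside₂ {Δ : Set Pt} {γ γ₁ γ₂ : List Pt} {d : ℤ} {y : Pt} (h : Mv γ d y γ₁ γ₂)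
    (h2 : Inside Δ γ₂) : Inside Δ γ₁ := by
  cases h
  simp only [Inside, List.mem_append, List.mem_cons] at *
  intro z hz
  exact h2 z (by tauto)

structure Good (Δ : Set Pt) (Init : List Pt → Prop) : Prop where
  conv : ∀ (α β δ : ℤ) (u v w z : Pt), 0 ≤ α → 0 ≤ β → 0 ≤ δ → 0 < α + β + δ →
    u ∈ Δ → v ∈ Δ → w ∈ Δ → (α + β + δ) * z.1 = α * u.1 + β * v.1 + δ * w.1 →
    (α + β + δ) * z.2 = α * u.2 + β * v.2 + δ * w.2 → z ∈ Δ
  init_turn : ∀ A x y z B, Init (A ++ x :: y :: z :: B) → det (y - x) (z - y) ≤ 0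
  init_swap : ∀ A x y z B, Init (A ++ x :: y :: z :: B) → det (y - x) (z - y) = 0 →
    Init (A ++ x :: (x + z - y) :: z :: B)

section main
variable {Δ : Set Pt} {Init : List Pt → Prop}

variable (Δ Init) in
def TT (n : ℕ) : Prop := ∀ γ d y γ₁ γ₂, Mv γ d y γ₁ γ₂ → mu γ < n → Increasing γ → 0 < d →
  (Inside Δ γ₁ → y ∈ Δ) → N Δ Init γ = d * N Δ Init γ₁ + N Δ Init γ₂

variable (Δ Init) in
def SS (n : ℕ) : Prop := ∀ γ y γ₁ γ₂, Mv γ 0 y γ₁ γ₂ → mu γ < n → Increasing γ →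
  N Δ Init γ = N Δ Init γ₂

theorem det_ac {a b c : Pt} (ha : lamLT (0,0) a) (hb : lamLT (0,0) b) (hc : lamLT (0,0) c)
    (hab : 0 < det a b) (hbc : 0 < det b c) : 0 < det a c := by
  have key : det a c * b.1 = det a b * c.1 + det b c * a.1 := by simp only [det]; ring
  simp only [lamLT] at *
  have hb1 : 0 < b.1 := by
    rcases hb with h | ⟨h, h'⟩
    · exact h
    · simp only [det, ← h] at hab
      have : 0 ≤ a.1 := by omega
      nlinarith
  have h0 : 0 < det a b * c.1 + det b c * a.1 := by
    rcases hc with h | ⟨h, h'⟩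
    · have : 0 ≤ a.1 := by omega
      positivity
    · simp only [det, ← h] at hbc
      nlinarith
  rw [← key] at h0
  exact pos_of_mul_pos_left h0 hb1.le

theorem lamLT_sub {x y : Pt} (h : lamLT x y) : lamLT (0,0) (y - x) := by
  simp only [lamLT, Prod.fst_sub, Prod.snd_sub] at *; omega

/-- adjacent turns -/
theorem adj (g : Good Δ Init) {n : ℕ} (hT : TT Δ Init n) (hS : SS Δ Init n)
    (A B : List Pt) (o p1 p2 p3 : Pt)
    (hmu : mu (A ++ o :: p1 :: p2 :: p3 :: B) < n + 1)
    (hinc : Increasing (A ++ o :: p1 :: p2 :: p3 :: B))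
    (hin : Inside Δ (A ++ o :: p1 :: p2 :: p3 :: B))
    (h1 : 0 < det (p1 - o) (p2 - p1)) (h2 : 0 < det (p2 - p1) (p3 - p2)) :
    det (p1 - o) (p2 - p1) * N Δ Init (A ++ o :: p2 :: p3 :: B) +
      N Δ Init (A ++ o :: (o + p2 - p1) :: p2 :: p3 :: B) =
    det (p2 - p1) (p3 - p2) * N Δ Init (A ++ o :: p1 :: p3 :: B) +
      N Δ Init (A ++ o :: p1 :: (p1 + p3 - p2) :: p3 :: B) := by
  have h3 : 0 < det (p1 - o) (p3 - p2) := by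
    have := hinc
    simp only [inc_iff, inc_cons] at this
    exact det_ac (lamLT_sub this.2.1) (lamLT_sub this.2.2.1) (lamLT_sub this.2.2.2.1) h1 h2
  have ho : o ∈ Δ := hin _ (by simp)
  have hp1 : p1 ∈ Δ := hin _ (by simp)
  have hp2 : p2 ∈ Δ := hin _ (by simp)
  have hp3 : p3 ∈ Δ := hin _ (by simp)
  obtain ⟨b, hb⟩ : ∃ b, b = o + p2 - p1 := ⟨_, rfl⟩
  obtain ⟨e, he⟩ : ∃ e, e = p1 + p3 - p2 := ⟨_, rfl⟩
  obtain ⟨c, hc⟩ : ∃ c, c = o + p3 - p2 := ⟨_, rfl⟩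
  obtain ⟨f, hf⟩ : ∃ f, f = o + p3 - p1 := ⟨_, rfl⟩
  obtain ⟨ab, hab⟩ : ∃ t, t = det (p1 - o) (p2 - p1) := ⟨_, rfl⟩
  obtain ⟨bc, hbc⟩ : ∃ t, t = det (p2 - p1) (p3 - p2) := ⟨_, rfl⟩
  obtain ⟨ac, hac⟩ : ∃ t, t = det (p1 - o) (p3 - p2) := ⟨_, rfl⟩
  rw [← hb, ← he, ← hab, ← hbc]
  rw [← hab] at h1; rw [← hbc] at h2; rw [← hac] at h3
  have mG : Mv (A ++ o :: p1 :: p2 :: p3 :: B) ab p1 (A ++ o :: p2 :: p3 :: B)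
      (A ++ o :: b :: p2 :: p3 :: B) :=
    Mv.of A (p3 :: B) o p2 b rfl rfl rfl hab hb
  have mH : Mv (A ++ o :: p1 :: p2 :: p3 :: B) bc p2 (A ++ o :: p1 :: p3 :: B)
      (A ++ o :: p1 :: e :: p3 :: B) :=
    Mv.of (A ++ [o]) B p1 p3 e (by simp) (by simp) (by simp) hbc he
  have mG1 : Mv (A ++ o :: p2 :: p3 :: B) (ac + bc) p2 (A ++ o :: p3 :: B)
      (A ++ o :: c :: p3 :: B) :=
    Mv.of A B o p3 c rfl rfl rfl (by rw [hac, hbc]; simp [det]; ring) hc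
  have mG2 : Mv (A ++ o :: b :: p2 :: p3 :: B) ac p2 (A ++ o :: b :: p3 :: B)
      (A ++ o :: b :: f :: p3 :: B) :=
    Mv.of (A ++ [o]) B b p3 f (by simp) (by simp) (by simp) (by rw [hac, hb]; simp [det]; ring)
      (by rw [hf, hb]; abel)
  have mBF : Mv (A ++ o :: b :: f :: p3 :: B) bc b (A ++ o :: f :: p3 :: B)
      (A ++ o :: c :: f :: p3 :: B) :=
    Mv.of A (p3 :: B) o f c rfl rfl rfl (by rw [hbc, hb, hf]; simp [det]; ring)
      (by rw [hf, hb, hc]; abel)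
  have mH1 : Mv (A ++ o :: p1 :: p3 :: B) (ab + ac) p1 (A ++ o :: p3 :: B)
      (A ++ o :: f :: p3 :: B) :=
    Mv.of A B o p3 f rfl rfl rfl (by rw [hac, hab]; simp [det]; ring) hf
  have mH2 : Mv (A ++ o :: p1 :: e :: p3 :: B) ac p1 (A ++ o :: e :: p3 :: B)
      (A ++ o :: c :: e :: p3 :: B) :=
    Mv.of A (p3 :: B) o e c rfl rfl rfl (by rw [hac, he]; simp [det]; ring)
      (by rw [hc, he]; abel)
  have mCE : Mv (A ++ o :: c :: e :: p3 :: B) ab e (A ++ o :: c :: p3 :: B)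
      (A ++ o :: c :: f :: p3 :: B) :=
    Mv.of (A ++ [o]) B c p3 f (by simp) (by simp) (by simp) (by rw [hab, he, hc]; simp [det]; ring)
      (by rw [hf, hc, he]; abel)
  have mB : Mv (A ++ o :: b :: p3 :: B) (bc - ab) b (A ++ o :: p3 :: B)
      (A ++ o :: e :: p3 :: B) :=
    Mv.of A B o p3 e rfl rfl rfl (by rw [hbc, hab, hb]; simp [det]; ring) (by rw [he, hb]; abel)
  have mE : Mv (A ++ o :: e :: p3 :: B) (ab - bc) e (A ++ o :: p3 :: B)
      (A ++ o :: b :: p3 :: B) :=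
    Mv.of A B o p3 b rfl rfl rfl (by rw [hbc, hab, he]; simp [det]; ring) (by rw [he, hb]; abel)
  have uG1 := mG.mu₁ h1
  have uG2 := mG.mu₂ h1
  have uH1 := mH.mu₁ h2
  have uH2 := mH.mu₂ h2
  have uBF := mG2.mu₂ h3
  have uB := mG2.mu₁ h3
  have uE := mH2.mu₁ h3
  have uCE := mH2.mu₂ h3
  have iG1 := mG.inc₁ hinc
  have iG2 := mG.inc₂ hinc
  have iH1 := mH.inc₁ hinc
  have iH2 := mH.inc₂ hinc
  have iBF := mG2.inc₂ iG2
  have iB := mG2.inc₁ iG2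
  have iE := mH2.inc₁ iH2
  have iCE := mH2.inc₂ iH2
  have E1 := hT _ _ _ _ _ mG1 (by omega) iG1 (by omega) (fun _ => hp2)
  have E2 := hT _ _ _ _ _ mG2 (by omega) iG2 (by omega) (fun _ => hp2)
  have E3 := hT _ _ _ _ _ mBF (by omega) iBF (by omega) (fun h => by
    have hfΔ : f ∈ Δ := h _ (by simp)
    refine g.conv ac ab bc o f p2 b h3.le h1.le h2.le (by omega) ho hfΔ hp2 ?_ ?_ <;>
      (rw [hac, hab, hbc, hf, hb]; simp [det]; ring))
  have E4 := hT _ _ _ _ _ mH1 (by omega) iH1 (by omega) (fun _ => hp1)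
  have E5 := hT _ _ _ _ _ mH2 (by omega) iH2 (by omega) (fun _ => hp1)
  have E6 := hT _ _ _ _ _ mCE (by omega) iCE (by omega) (fun h => by
    have hcΔ : c ∈ Δ := h _ (by simp)
    refine g.conv ac ab bc p3 p1 c e h3.le h1.le h2.le (by omega) hp3 hp1 hcΔ ?_ ?_ <;>
      (rw [hac, hab, hbc, hc, he]; simp [det]; ring))
  have E7 : N Δ Init (A ++ o :: b :: p3 :: B) =
      (bc - ab) * N Δ Init (A ++ o :: p3 :: B) + N Δ Init (A ++ o :: e :: p3 :: B) := by
    rcases lt_trichotomy ab bc with h | h | h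
    · refine hT _ _ _ _ _ mB (by omega) iB (by omega) (fun _ => ?_)
      refine g.conv ac (bc - ab) ab o p2 p3 b h3.le (by omega) h1.le (by omega) ho hp2 hp3 ?_ ?_ <;>
        (rw [hac, hab, hbc, hb]; simp [det]; ring)
    · have := hS _ b _ _ (by simpa [h] using mB) (by omega) iB
      rw [this, h]; ring
    · have := hT _ _ _ _ _ mE (by omega) iE (by omega) (fun _ => by
        refine g.conv ac (ab - bc) bc p3 p1 o e h3.le (by omega) h2.le (by omega)
          hp3 hp1 ho ?_ ?_ <;> (rw [hac, hab, hbc, he]; simp [det]; ring))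
      rw [this]; ring
  rw [E1, E2, E3, E4, E5, E6, E7]; ring

/-- distant turns -/
theorem far {n : ℕ} (hT : TT Δ Init n) {γ G1 G2 H1 H2 X11 X12 X21 X22 : List Pt} {d1 d2 : ℤ}
    {y1 y2 : Pt} (hmu : mu γ < n + 1) (hinc : Increasing γ) (hin : Inside Δ γ)
    (h1 : 0 < d1) (h2 : 0 < d2) (mG : Mv γ d1 y1 G1 G2) (mH : Mv γ d2 y2 H1 H2)
    (mG1 : Mv G1 d2 y2 X11 X12) (mG2 : Mv G2 d2 y2 X21 X22)
    (mH1 : Mv H1 d1 y1 X11 X21) (mH2 : Mv H2 d1 y1 X12 X22) :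
    d1 * N Δ Init G1 + N Δ Init G2 = d2 * N Δ Init H1 + N Δ Init H2 := by
  have hy1 := (mG.inside_iff.1 hin).2
  have hy2 := (mH.inside_iff.1 hin).2
  have uG1 := mG.mu₁ h1
  have uG2 := mG.mu₂ h1
  have uH1 := mH.mu₁ h2
  have uH2 := mH.mu₂ h2
  have E1 := hT _ _ _ _ _ mG1 (by omega) (mG.inc₁ hinc) h2 (fun _ => hy2)
  have E2 := hT _ _ _ _ _ mG2 (by omega) (mG.inc₂ hinc) h2 (fun _ => hy2)
  have E3 := hT _ _ _ _ _ mH1 (by omega) (mH.inc₁ hinc) h1 (fun _ => hy1)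
  have E4 := hT _ _ _ _ _ mH2 (by omega) (mH.inc₂ hinc) h1 (fun _ => hy1)
  rw [E1, E2, E3, E4]; ring

theorem list_cmp {A A' B B' : List Pt} {x y z x' y' z' : Pt}
    (h : A' ++ x' :: y' :: z' :: B' = A ++ x :: y :: z :: B) (hl : A'.length ≤ A.length) :
    (A = A' ∧ x = x' ∧ y = y' ∧ z = z' ∧ B = B') ∨
    (A = A' ++ [x'] ∧ x = y' ∧ y = z' ∧ B' = z :: B) ∨
    (A = A' ++ [x', y'] ∧ x = z' ∧ B' = y :: z :: B) ∨
    (∃ C, A = A' ++ x' :: y' :: z' :: C ∧ B' = C ++ x :: y :: z :: B) := by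
  rcases List.append_eq_append_iff.1 h with ⟨C, h1, h2⟩ | ⟨C, h1, h2⟩
  · rcases C with _ | ⟨c1, _ | ⟨c2, _ | ⟨c3, C⟩⟩⟩
    · simp at h1 h2; left; simp_all
    · simp at h2; right; left; simp_all
    · simp at h2; right; right; left; simp_all
    · simp at h2; right; right; right; exact ⟨C, by simp_all⟩
  · have : C = [] := by
      have := congrArg List.length h1
      simp at this
      exact List.eq_nil_of_length_eq_zero (by omega)
    subst this
    simp at h1 h2; left; simp_all

theorem cmp (g : Good Δ Init) {n : ℕ} (hT : TT Δ Init n) (hS : SS Δ Init n)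
    {A A' B B' : List Pt} {x y z x' y' z' : Pt}
    (h : A' ++ x' :: y' :: z' :: B' = A ++ x :: y :: z :: B) (hl : A'.length ≤ A.length)
    (hmu : mu (A ++ x :: y :: z :: B) < n + 1) (hinc : Increasing (A ++ x :: y :: z :: B))
    (hin : Inside Δ (A ++ x :: y :: z :: B))
    (h1 : 0 < det (y' - x') (z' - y')) (h2 : 0 < det (y - x) (z - y)) :
    det (y' - x') (z' - y') * N Δ Init (A' ++ x' :: z' :: B') +
      N Δ Init (A' ++ x' :: (x' + z' - y') :: z' :: B') =
    det (y - x) (z - y) * N Δ Init (A ++ x :: z :: B) +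
      N Δ Init (A ++ x :: (x + z - y) :: z :: B) := by
  rcases list_cmp h hl with ⟨rfl, rfl, rfl, rfl, rfl⟩ | ⟨rfl, rfl, rfl, rfl⟩ | ⟨rfl, rfl, rfl⟩ |
    ⟨C, rfl, rfl⟩
  · rfl
  · have := adj g hT hS A' B x' x y z (by simpa using hmu) (by simpa using hinc)
      (by simpa using hin) h1 h2
    simpa using this
  · refine far hT (y1 := y') (y2 := y) (γ := A' ++ x' :: y' :: x :: y :: z :: B)
      (X11 := A' ++ x' :: x :: z :: B) (X12 := A' ++ x' :: x :: (x + z - y) :: z :: B)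
      (X21 := A' ++ x' :: (x' + x - y') :: x :: z :: B)
      (X22 := A' ++ x' :: (x' + x - y') :: x :: (x + z - y) :: z :: B)
      (by simpa using hmu) (by simpa using hinc) (by simpa using hin) h1 h2 ?_ ?_ ?_ ?_ ?_ ?_
    · exact Mv.mk _ _ _ _ _
    · exact Mv.of (A' ++ [x', y']) B x z (x + z - y) (by simp) (by simp) (by simp) rfl rfl
    · exact Mv.of (A' ++ [x']) B x z (x + z - y) (by simp) (by simp) (by simp) rfl rfl
    · exact Mv.of (A' ++ [x', x' + x - y']) B x z (x + z - y) (by simp) (by simp) (by simp) rfl rfl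
    · exact Mv.of A' (z :: B) x' x (x' + x - y') (by simp) (by simp) (by simp) rfl rfl
    · exact Mv.of A' ((x + z - y) :: z :: B) x' x (x' + x - y') (by simp) (by simp) (by simp)
        rfl rfl
  · refine far hT (y1 := y') (y2 := y) (γ := A' ++ x' :: y' :: z' :: (C ++ x :: y :: z :: B))
      (X11 := A' ++ x' :: z' :: (C ++ x :: z :: B))
      (X12 := A' ++ x' :: z' :: (C ++ x :: (x + z - y) :: z :: B))
      (X21 := A' ++ x' :: (x' + z' - y') :: z' :: (C ++ x :: z :: B))
      (X22 := A' ++ x' :: (x' + z' - y') :: z' :: (C ++ x :: (x + z - y) :: z :: B))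
      (by simpa using hmu) (by simpa using hinc) (by simpa using hin) h1 h2 ?_ ?_ ?_ ?_ ?_ ?_
    · exact Mv.mk _ _ _ _ _
    · exact Mv.of (A' ++ x' :: y' :: z' :: C) B x z (x + z - y) (by simp) (by simp) (by simp) rfl rfl
    · exact Mv.of (A' ++ x' :: z' :: C) B x z (x + z - y) (by simp) (by simp) (by simp) rfl rfl
    · exact Mv.of (A' ++ x' :: (x' + z' - y') :: z' :: C) B x z (x + z - y) (by simp) (by simp)
        (by simp) rfl rfl
    · exact Mv.of A' (C ++ x :: z :: B) x' z' (x' + z' - y') (by simp) (by simp) (by simp) rfl rfl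
    · exact Mv.of A' (C ++ x :: (x + z - y) :: z :: B) x' z' (x' + z' - y') (by simp) (by simp)
        (by simp) rfl rfl

theorem N_first (g : Good Δ Init) {A B : List Pt} {x y z : Pt}
    (hin : Inside Δ (A ++ x :: y :: z :: B)) (hd : 0 < det (y - x) (z - y)) :
    ∃ A' x' y' z' B', A' ++ x' :: y' :: z' :: B' = A ++ x :: y :: z :: B ∧
      A'.length ≤ A.length ∧ 0 < det (y' - x') (z' - y') ∧
      N Δ Init (A ++ x :: y :: z :: B) = det (y' - x') (z' - y') * N Δ Init (A' ++ x' :: z' :: B') +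
      N Δ Init (A' ++ x' :: (x' + z' - y') :: z' :: B') := by
  have ht := turnAt_mk sg A B x y z hd
  have hi : ¬ Init (A ++ x :: y :: z :: B) := fun h => by
    have := g.init_turn _ _ _ _ _ h; omega
  obtain ⟨k, hk⟩ := firstTurn_exists ⟨_, ht⟩
  have hle := hk.2 _ ht
  obtain ⟨A', x', y', z', B', e, ek, hd'⟩ := turnAt_split hk.1
  refine ⟨A', x', y', z', B', e.symm, by omega, hd', ?_⟩
  have hm := multOf_first (Δ := Δ) hi hk
  rw [e] at hm hin ⊢
  rw [ek, cut_mk, push_mk, tri_mk] at hm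
  have hc : Inside Δ (A' ++ x' :: z' :: B') := ((Mv.mk A' B' x' y' z').inside_iff.1 hin).1
  have hd2 : ((det (y' - x') (z' - y')).natAbs : ℤ) = det (y' - x') (z' - y') :=
    Int.natAbs_of_nonneg (le_of_lt hd')
  unfold N
  rw [if_pos hin, if_pos hc, hm]
  rw [Nat.cast_add, Nat.cast_mul, hd2]
  push_cast
  rfl

theorem TT_succ (g : Good Δ Init) {n : ℕ} (hT : TT Δ Init n) (hS : SS Δ Init n) :
    TT Δ Init (n + 1) := by
  intro γ d y γ₁ γ₂ m hmu hinc hd hy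
  by_cases hin : Inside Δ γ
  · obtain ⟨A, B, x, y, z⟩ := m
    obtain ⟨A', x', y', z', B', e, hl, hd', he⟩ := N_first g hin hd
    rw [he]
    exact cmp g hT hS e hl hmu hinc hin hd' hd
  · have h1 : ¬ Inside Δ γ₁ := fun h => hin (m.inside_iff.2 ⟨h, hy h⟩)
    have h2 : ¬ Inside Δ γ₂ := fun h => h1 (m.inside₂ h)
    simp [N, hin, h1, h2]

theorem par_in (g : Good Δ Init) {x y z : Pt} (hxy : lamLT x y) (hyz : lamLT y z)
    (hd : det (y - x) (z - y) = 0) (hx : x ∈ Δ) (hz : z ∈ Δ) : y ∈ Δ := by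
  simp only [lamLT, det, Prod.fst_sub, Prod.snd_sub] at *
  by_cases h : x.1 < z.1
  · refine g.conv (z.1 - y.1) (y.1 - x.1) 0 x z z y (by omega) (by omega) le_rfl (by omega)
      hx hz hz ?_ ?_ <;> linarith
  · refine g.conv (y.2 - z.2) (x.2 - y.2) 0 x z z y (by omega) (by omega) le_rfl (by omega)
      hx hz hz ?_ ?_ <;> linarith

theorem Mv.symm {γ γ₁ γ₂ : List Pt} {d : ℤ} {y : Pt} (h : Mv γ d y γ₁ γ₂) :
    ∃ y', Mv γ₂ (-d) y' γ₁ γ := by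
  obtain ⟨A, B, x, y, z⟩ := h
  exact ⟨_, Mv.of A B x z y rfl rfl rfl (by simp [det]; ring) (by abel)⟩

theorem Mv.par_inside (g : Good Δ Init) {γ γ₁ γ₂ : List Pt} {d : ℤ} {y : Pt}
    (h : Mv γ d y γ₁ γ₂) (hd : d = 0) (hinc : Increasing γ) : Inside Δ γ ↔ Inside Δ γ₁ := by
  rw [h.inside_iff]
  refine ⟨fun h => h.1, fun h1 => ⟨h1, ?_⟩⟩
  obtain ⟨A, B, x, y, z⟩ := h
  simp only [inc_iff, inc_cons] at hinc
  exact par_in g hinc.2.1 hinc.2.2.1 hd (h1 _ (by simp)) (h1 _ (by simp))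

theorem par_pos {u v w : Pt} (hu : lamLT (0,0) u) (hv : lamLT (0,0) v) (h : det u v = 0)
    (hw : 0 < det w u) : 0 < det w v := by
  have k1 : det w u * v.1 = det w v * u.1 := by simp only [det] at *; linear_combination (-w.1) * h
  have k2 : det w u * v.2 = det w v * u.2 := by simp only [det] at *; linear_combination (-w.2) * h
  simp only [lamLT] at *
  rcases hv with hv | ⟨hv, hv'⟩
  · have : 0 < det w v * u.1 := by rw [← k1]; positivity
    exact pos_of_mul_pos_left this (by omega)
  · rcases hu with hu | ⟨hu, hu'⟩
    · rw [← hv, mul_zero] at k1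
      have : det w v = 0 := by
        rcases mul_eq_zero.1 k1.symm with h | h
        · exact h
        · omega
      rw [this] at k2; nlinarith
    · nlinarith

theorem par_pos' {u v w : Pt} (hu : lamLT (0,0) u) (hv : lamLT (0,0) v) (h : det u v = 0)
    (hw : 0 < det v w) : 0 < det u w := by
  have k1 : det v w * u.1 = det u w * v.1 := by simp only [det] at *; linear_combination (-w.1) * h
  have k2 : det v w * u.2 = det u w * v.2 := by simp only [det] at *; linear_combination (-w.2) * h
  simp only [lamLT] at *
  rcases hu with hu | ⟨hu, hu'⟩
  · have : 0 < det u w * v.1 := by rw [← k1]; positivity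
    exact pos_of_mul_pos_left this (by omega)
  · rcases hv with hv | ⟨hv, hv'⟩
    · rw [← hu, mul_zero] at k1
      have : det u w = 0 := by
        rcases mul_eq_zero.1 k1.symm with h | h
        · exact h
        · omega
      rw [this] at k2; nlinarith
    · nlinarith

theorem sadj1 {n : ℕ} (hT : TT Δ Init (n + 1)) (hS : SS Δ Init n)
    (A B : List Pt) (o p1 p2 p3 : Pt)
    (hmu : mu (A ++ o :: p1 :: p2 :: p3 :: B) < n + 1)
    (hinc : Increasing (A ++ o :: p1 :: p2 :: p3 :: B))
    (hin : Inside Δ (A ++ o :: p1 :: p2 :: p3 :: B))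
    (hin' : Inside Δ (A ++ o :: p1 :: (p1 + p3 - p2) :: p3 :: B))
    (h1 : 0 < det (p1 - o) (p2 - p1)) (h2 : det (p2 - p1) (p3 - p2) = 0) :
    N Δ Init (A ++ o :: p1 :: p2 :: p3 :: B) =
      N Δ Init (A ++ o :: p1 :: (p1 + p3 - p2) :: p3 :: B) := by
  have h3 : 0 < det (p1 - o) (p3 - p2) := by
    have := hinc
    simp only [inc_iff, inc_cons] at this
    exact par_pos (lamLT_sub this.2.2.1) (lamLT_sub this.2.2.2.1) h2 h1
  have hp1 : p1 ∈ Δ := hin _ (by simp)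
  have hp2 : p2 ∈ Δ := hin _ (by simp)
  obtain ⟨b, hb⟩ : ∃ b, b = o + p2 - p1 := ⟨_, rfl⟩
  obtain ⟨e, he⟩ : ∃ e, e = p1 + p3 - p2 := ⟨_, rfl⟩
  obtain ⟨c, hc⟩ : ∃ c, c = o + p3 - p2 := ⟨_, rfl⟩
  obtain ⟨f, hf⟩ : ∃ f, f = o + p3 - p1 := ⟨_, rfl⟩
  obtain ⟨wu, hwu⟩ : ∃ t, t = det (p1 - o) (p2 - p1) := ⟨_, rfl⟩
  obtain ⟨wv, hwv⟩ : ∃ t, t = det (p1 - o) (p3 - p2) := ⟨_, rfl⟩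
  rw [← he] at hin' ⊢
  have heΔ : e ∈ Δ := hin' _ (by simp)
  rw [← hwu] at h1; rw [← hwv] at h3
  have mS : Mv (A ++ o :: p1 :: p2 :: p3 :: B) 0 p2 (A ++ o :: p1 :: p3 :: B)
      (A ++ o :: p1 :: e :: p3 :: B) :=
    Mv.of (A ++ [o]) B p1 p3 e (by simp) (by simp) (by simp) h2.symm he
  have mG : Mv (A ++ o :: p1 :: p2 :: p3 :: B) wu p1 (A ++ o :: p2 :: p3 :: B)
      (A ++ o :: b :: p2 :: p3 :: B) :=
    Mv.of A (p3 :: B) o p2 b rfl rfl rfl hwu hb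
  have mG1 : Mv (A ++ o :: p2 :: p3 :: B) wv p2 (A ++ o :: p3 :: B)
      (A ++ o :: c :: p3 :: B) :=
    Mv.of A B o p3 c rfl rfl rfl (by rw [hwv]; simp [det] at h2 ⊢; linear_combination -h2) hc
  have mG2 : Mv (A ++ o :: b :: p2 :: p3 :: B) wv p2 (A ++ o :: b :: p3 :: B)
      (A ++ o :: b :: f :: p3 :: B) :=
    Mv.of (A ++ [o]) B b p3 f (by simp) (by simp) (by simp) (by rw [hwv, hb]; simp [det]; ring)
      (by rw [hf, hb]; abel)
  have mH : Mv (A ++ o :: p1 :: e :: p3 :: B) wv p1 (A ++ o :: e :: p3 :: B)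
      (A ++ o :: c :: e :: p3 :: B) :=
    Mv.of A (p3 :: B) o e c rfl rfl rfl (by rw [hwv, he]; simp [det]; ring)
      (by rw [hc, he]; abel)
  have mE : Mv (A ++ o :: e :: p3 :: B) wu e (A ++ o :: p3 :: B)
      (A ++ o :: b :: p3 :: B) :=
    Mv.of A B o p3 b rfl rfl rfl (by rw [hwu, he]; simp [det] at h2 ⊢; linear_combination h2)
      (by rw [he, hb]; abel)
  have mCE : Mv (A ++ o :: c :: e :: p3 :: B) wu e (A ++ o :: c :: p3 :: B)
      (A ++ o :: c :: f :: p3 :: B) :=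
    Mv.of (A ++ [o]) B c p3 f (by simp) (by simp) (by simp) (by rw [hwu, he, hc]; simp [det]; ring)
      (by rw [hf, hc, he]; abel)
  have mBF : Mv (A ++ o :: b :: f :: p3 :: B) 0 b (A ++ o :: f :: p3 :: B)
      (A ++ o :: c :: f :: p3 :: B) :=
    Mv.of A (p3 :: B) o f c rfl rfl rfl (by rw [← h2, hb, hf]; simp [det]; ring)
      (by rw [hf, hb, hc]; abel)
  have u0 := mS.mu₀ rfl
  have uG1 := mG.mu₁ h1
  have uG2 := mG.mu₂ h1
  have uBF := mG2.mu₂ h3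
  have uE := mH.mu₁ h3
  have uCE := mH.mu₂ h3
  have i0 := mS.inc₂ hinc
  have iG2 := mG.inc₂ hinc
  have E0 := hT _ _ _ _ _ mG (by omega) hinc h1 (fun _ => hp1)
  have E1 := hT _ _ _ _ _ mG1 (by omega) (mG.inc₁ hinc) h3 (fun _ => hp2)
  have E2 := hT _ _ _ _ _ mG2 (by omega) iG2 h3 (fun _ => hp2)
  have E3 := hT _ _ _ _ _ mH (by omega) i0 h3 (fun _ => hp1)
  have E4 := hT _ _ _ _ _ mE (by omega) (mH.inc₁ i0) h1 (fun _ => heΔ)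
  have E5 := hT _ _ _ _ _ mCE (by omega) (mH.inc₂ i0) h1 (fun _ => heΔ)
  have E6 := hS _ _ _ _ mBF (by omega) (mG2.inc₂ iG2)
  rw [E0, E1, E2, E3, E4, E5, E6]; ring

theorem sadj2 {n : ℕ} (hT : TT Δ Init (n + 1)) (hS : SS Δ Init n)
    (A B : List Pt) (o p1 p2 p3 : Pt)
    (hmu : mu (A ++ o :: p1 :: p2 :: p3 :: B) < n + 1)
    (hinc : Increasing (A ++ o :: p1 :: p2 :: p3 :: B))
    (hin : Inside Δ (A ++ o :: p1 :: p2 :: p3 :: B))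
    (hin' : Inside Δ (A ++ o :: (o + p2 - p1) :: p2 :: p3 :: B))
    (h1 : det (p1 - o) (p2 - p1) = 0) (h2 : 0 < det (p2 - p1) (p3 - p2)) :
    N Δ Init (A ++ o :: p1 :: p2 :: p3 :: B) =
      N Δ Init (A ++ o :: (o + p2 - p1) :: p2 :: p3 :: B) := by
  have h3 : 0 < det (p1 - o) (p3 - p2) := by
    have := hinc
    simp only [inc_iff, inc_cons] at this
    exact par_pos' (lamLT_sub this.2.1) (lamLT_sub this.2.2.1) h1 h2
  have hp1 : p1 ∈ Δ := hin _ (by simp)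
  have hp2 : p2 ∈ Δ := hin _ (by simp)
  obtain ⟨b, hb⟩ : ∃ b, b = o + p2 - p1 := ⟨_, rfl⟩
  obtain ⟨e, he⟩ : ∃ e, e = p1 + p3 - p2 := ⟨_, rfl⟩
  obtain ⟨c, hc⟩ : ∃ c, c = o + p3 - p2 := ⟨_, rfl⟩
  obtain ⟨f, hf⟩ : ∃ f, f = o + p3 - p1 := ⟨_, rfl⟩
  obtain ⟨vw, hvw⟩ : ∃ t, t = det (p2 - p1) (p3 - p2) := ⟨_, rfl⟩
  obtain ⟨uw, huw⟩ : ∃ t, t = det (p1 - o) (p3 - p2) := ⟨_, rfl⟩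
  rw [← hb] at hin' ⊢
  have hbΔ : b ∈ Δ := hin' _ (by simp)
  rw [← hvw] at h2; rw [← huw] at h3
  have mS : Mv (A ++ o :: p1 :: p2 :: p3 :: B) 0 p1 (A ++ o :: p2 :: p3 :: B)
      (A ++ o :: b :: p2 :: p3 :: B) :=
    Mv.of A (p3 :: B) o p2 b rfl rfl rfl h1.symm hb
  have mH : Mv (A ++ o :: p1 :: p2 :: p3 :: B) vw p2 (A ++ o :: p1 :: p3 :: B)
      (A ++ o :: p1 :: e :: p3 :: B) :=
    Mv.of (A ++ [o]) B p1 p3 e (by simp) (by simp) (by simp) hvw he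
  have mH1 : Mv (A ++ o :: p1 :: p3 :: B) uw p1 (A ++ o :: p3 :: B)
      (A ++ o :: f :: p3 :: B) :=
    Mv.of A B o p3 f rfl rfl rfl (by rw [huw]; simp [det] at h1 ⊢; linear_combination -h1) hf
  have mH2 : Mv (A ++ o :: p1 :: e :: p3 :: B) uw p1 (A ++ o :: e :: p3 :: B)
      (A ++ o :: c :: e :: p3 :: B) :=
    Mv.of A (p3 :: B) o e c rfl rfl rfl (by rw [huw, he]; simp [det]; ring)
      (by rw [hc, he]; abel)
  have mG : Mv (A ++ o :: b :: p2 :: p3 :: B) uw p2 (A ++ o :: b :: p3 :: B)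
      (A ++ o :: b :: f :: p3 :: B) :=
    Mv.of (A ++ [o]) B b p3 f (by simp) (by simp) (by simp) (by rw [huw, hb]; simp [det]; ring)
      (by rw [hf, hb]; abel)
  have mB : Mv (A ++ o :: b :: p3 :: B) vw b (A ++ o :: p3 :: B)
      (A ++ o :: e :: p3 :: B) :=
    Mv.of A B o p3 e rfl rfl rfl (by rw [hvw, hb]; simp [det] at h1 ⊢; linear_combination h1)
      (by rw [he, hb]; abel)
  have mBF : Mv (A ++ o :: b :: f :: p3 :: B) vw b (A ++ o :: f :: p3 :: B)
      (A ++ o :: c :: f :: p3 :: B) :=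
    Mv.of A (p3 :: B) o f c rfl rfl rfl (by rw [hvw, hb, hf]; simp [det]; ring)
      (by rw [hf, hb, hc]; abel)
  have mCE : Mv (A ++ o :: c :: e :: p3 :: B) 0 e (A ++ o :: c :: p3 :: B)
      (A ++ o :: c :: f :: p3 :: B) :=
    Mv.of (A ++ [o]) B c p3 f (by simp) (by simp) (by simp)
      (by rw [← h1, he, hc]; simp [det]; ring) (by rw [hf, hc, he]; abel)
  have u0 := mS.mu₀ rfl
  have uH1 := mH.mu₁ h2
  have uH2 := mH.mu₂ h2
  have uCE := mH2.mu₂ h3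
  have uB := mG.mu₁ h3
  have uBF := mG.mu₂ h3
  have i0 := mS.inc₂ hinc
  have iH2 := mH.inc₂ hinc
  have E0 := hT _ _ _ _ _ mH (by omega) hinc h2 (fun _ => hp2)
  have E1 := hT _ _ _ _ _ mH1 (by omega) (mH.inc₁ hinc) h3 (fun _ => hp1)
  have E2 := hT _ _ _ _ _ mH2 (by omega) iH2 h3 (fun _ => hp1)
  have E3 := hT _ _ _ _ _ mG (by omega) i0 h3 (fun _ => hp2)
  have E4 := hT _ _ _ _ _ mB (by omega) (mG.inc₁ i0) h2 (fun _ => hbΔ)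
  have E5 := hT _ _ _ _ _ mBF (by omega) (mG.inc₂ i0) h2 (fun _ => hbΔ)
  have E6 := hS _ _ _ _ mCE (by omega) (mH2.inc₂ iH2)
  rw [E0, E1, E2, E3, E4, E5, E6]; ring

theorem sfar {n : ℕ} (hT : TT Δ Init (n + 1)) (hS : SS Δ Init n)
    {γ γ' G1 G2 H1 X11 X12 X21 X22 : List Pt} {d1 d2 : ℤ}
    {y1 y2 : Pt} (hmu : mu γ < n + 1) (hinc : Increasing γ) (hin : Inside Δ γ)
    (h1 : 0 < d1) (h2 : d2 = 0) (mG : Mv γ d1 y1 G1 G2) (mH : Mv γ d2 y2 H1 γ')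
    (mG1 : Mv G1 d2 y2 X11 X12) (mG2 : Mv G2 d2 y2 X21 X22)
    (mH2 : Mv γ' d1 y1 X12 X22) : N Δ Init γ = N Δ Init γ' := by
  have hy1 := (mG.inside_iff.1 hin).2
  have u0 := mH.mu₀ h2
  have uG1 := mG.mu₁ h1
  have uG2 := mG.mu₂ h1
  have i0 := mH.inc₂ hinc
  subst h2
  have E0 := hT _ _ _ _ _ mG (by omega) hinc h1 (fun _ => hy1)
  have E1 := hT _ _ _ _ _ mH2 (by omega) i0 h1 (fun _ => hy1)
  have E2 := hS _ _ _ _ mG1 (by omega) (mG.inc₁ hinc)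
  have E3 := hS _ _ _ _ mG2 (by omega) (mG.inc₂ hinc)
  rw [E0, E1, E2, E3]

theorem S_turn {n : ℕ} (hT : TT Δ Init (n + 1)) (hS : SS Δ Init n)
    {A A' B B' : List Pt} {x y z x' y' z' : Pt}
    (h : A' ++ x' :: y' :: z' :: B' = A ++ x :: y :: z :: B)
    (hmu : mu (A ++ x :: y :: z :: B) < n + 1) (hinc : Increasing (A ++ x :: y :: z :: B))
    (hin : Inside Δ (A ++ x :: y :: z :: B))
    (hin' : Inside Δ (A ++ x :: (x + z - y) :: z :: B))
    (h1 : 0 < det (y' - x') (z' - y')) (h2 : det (y - x) (z - y) = 0) :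
    N Δ Init (A ++ x :: y :: z :: B) = N Δ Init (A ++ x :: (x + z - y) :: z :: B) := by
  rcases le_total A'.length A.length with hl | hl
  · rcases list_cmp h hl with ⟨rfl, rfl, rfl, rfl, rfl⟩ | ⟨rfl, rfl, rfl, rfl⟩ | ⟨rfl, rfl, rfl⟩ |
      ⟨C, rfl, rfl⟩
    · omega
    · have := sadj1 hT hS A' B x' x y z (by simpa using hmu) (by simpa using hinc)
        (by simpa using hin) (by simpa using hin') h1 h2
      simpa using this
    · refine sfar hT hS (y1 := y') (y2 := y)
        (G1 := A' ++ x' :: x :: y :: z :: B)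
        (G2 := A' ++ x' :: (x' + x - y') :: x :: y :: z :: B)
        (H1 := A' ++ x' :: y' :: x :: z :: B)
        (X11 := A' ++ x' :: x :: z :: B) (X12 := A' ++ x' :: x :: (x + z - y) :: z :: B)
        (X21 := A' ++ x' :: (x' + x - y') :: x :: z :: B)
        (X22 := A' ++ x' :: (x' + x - y') :: x :: (x + z - y) :: z :: B)
        hmu hinc hin h1 h2 ?_ ?_ ?_ ?_ ?_
      · exact Mv.of A' (y :: z :: B) x' x (x' + x - y') (by simp) (by simp) (by simp) rfl rfl
      · exact Mv.of (A' ++ [x', y']) B x z (x + z - y) (by simp) (by simp) (by simp) rfl rfl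
      · exact Mv.of (A' ++ [x']) B x z (x + z - y) (by simp) (by simp) (by simp) rfl rfl
      · exact Mv.of (A' ++ [x', x' + x - y']) B x z (x + z - y) (by simp) (by simp) (by simp)
          rfl rfl
      · exact Mv.of A' ((x + z - y) :: z :: B) x' x (x' + x - y') (by simp) (by simp) (by simp)
          rfl rfl
    · refine sfar hT hS (y1 := y') (y2 := y)
        (G1 := A' ++ x' :: z' :: (C ++ x :: y :: z :: B))
        (G2 := A' ++ x' :: (x' + z' - y') :: z' :: (C ++ x :: y :: z :: B))
        (H1 := A' ++ x' :: y' :: z' :: (C ++ x :: z :: B))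
        (X11 := A' ++ x' :: z' :: (C ++ x :: z :: B))
        (X12 := A' ++ x' :: z' :: (C ++ x :: (x + z - y) :: z :: B))
        (X21 := A' ++ x' :: (x' + z' - y') :: z' :: (C ++ x :: z :: B))
        (X22 := A' ++ x' :: (x' + z' - y') :: z' :: (C ++ x :: (x + z - y) :: z :: B))
        hmu hinc hin h1 h2 ?_ ?_ ?_ ?_ ?_
      · exact Mv.of A' (C ++ x :: y :: z :: B) x' z' (x' + z' - y') (by simp) (by simp) (by simp)
          rfl rfl
      · exact Mv.of (A' ++ x' :: y' :: z' :: C) B x z (x + z - y) (by simp) (by simp) (by simp)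
          rfl rfl
      · exact Mv.of (A' ++ x' :: z' :: C) B x z (x + z - y) (by simp) (by simp) (by simp) rfl rfl
      · exact Mv.of (A' ++ x' :: (x' + z' - y') :: z' :: C) B x z (x + z - y) (by simp) (by simp)
          (by simp) rfl rfl
      · exact Mv.of A' (C ++ x :: (x + z - y) :: z :: B) x' z' (x' + z' - y') (by simp) (by simp)
          (by simp) rfl rfl
  · rcases list_cmp h.symm hl with ⟨rfl, rfl, rfl, rfl, rfl⟩ | ⟨rfl, rfl, rfl, rfl⟩ |
      ⟨rfl, rfl, rfl⟩ | ⟨C, rfl, rfl⟩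
    · omega
    · exact sadj2 hT hS A B' x x' y' z' hmu hinc hin hin' h2 h1
    · refine sfar hT hS (y1 := y') (y2 := y)
        (G1 := A ++ x :: y :: x' :: z' :: B')
        (G2 := A ++ x :: y :: x' :: (x' + z' - y') :: z' :: B')
        (H1 := A ++ x :: x' :: y' :: z' :: B')
        (X11 := A ++ x :: x' :: z' :: B')
        (X12 := A ++ x :: (x + x' - y) :: x' :: z' :: B')
        (X21 := A ++ x :: x' :: (x' + z' - y') :: z' :: B')
        (X22 := A ++ x :: (x + x' - y) :: x' :: (x' + z' - y') :: z' :: B')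
        hmu hinc hin h1 h2 ?_ ?_ ?_ ?_ ?_
      · exact Mv.of (A ++ [x, y]) B' x' z' (x' + z' - y') (by simp) (by simp) (by simp) rfl rfl
      · exact Mv.mk _ _ _ _ _
      · exact Mv.mk _ _ _ _ _
      · exact Mv.mk _ _ _ _ _
      · exact Mv.of (A ++ [x, x + x' - y]) B' x' z' (x' + z' - y') (by simp) (by simp) (by simp)
          rfl rfl
    · refine sfar hT hS (y1 := y') (y2 := y)
        (G1 := A ++ x :: y :: z :: (C ++ x' :: z' :: B'))
        (G2 := A ++ x :: y :: z :: (C ++ x' :: (x' + z' - y') :: z' :: B'))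
        (H1 := A ++ x :: z :: (C ++ x' :: y' :: z' :: B'))
        (X11 := A ++ x :: z :: (C ++ x' :: z' :: B'))
        (X12 := A ++ x :: (x + z - y) :: z :: (C ++ x' :: z' :: B'))
        (X21 := A ++ x :: z :: (C ++ x' :: (x' + z' - y') :: z' :: B'))
        (X22 := A ++ x :: (x + z - y) :: z :: (C ++ x' :: (x' + z' - y') :: z' :: B'))
        hmu hinc hin h1 h2 ?_ ?_ ?_ ?_ ?_
      · exact Mv.of (A ++ x :: y :: z :: C) B' x' z' (x' + z' - y') (by simp) (by simp) (by simp)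
          rfl rfl
      · exact Mv.mk _ _ _ _ _
      · exact Mv.mk _ _ _ _ _
      · exact Mv.mk _ _ _ _ _
      · exact Mv.of (A ++ x :: (x + z - y) :: z :: C) B' x' z' (x' + z' - y') (by simp) (by simp)
          (by simp) rfl rfl

theorem S_turn' {n : ℕ} (hT : TT Δ Init (n + 1)) (hS : SS Δ Init n)
    {γ γ₁ γ₂ : List Pt} {y : Pt} (m : Mv γ 0 y γ₁ γ₂) (ht : ∃ k, TurnAt sg γ k)
    (hmu : mu γ < n + 1) (hinc : Increasing γ) (hin : Inside Δ γ) (hin' : Inside Δ γ₂) :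
    N Δ Init γ = N Δ Init γ₂ := by
  obtain ⟨d, hd⟩ : ∃ d : ℤ, d = 0 := ⟨0, rfl⟩
  rw [← hd] at m
  obtain ⟨A, B, x, y, z⟩ := m
  obtain ⟨k, hk⟩ := ht
  obtain ⟨A', x', y', z', B', e, ek, hd'⟩ := turnAt_split hk
  exact S_turn hT hS e.symm hmu hinc hin hin' hd' hd

theorem multOf_noTurn {γ : List Pt} (ht : ¬ ∃ k, TurnAt sg γ k) :
    multOf Δ Init sg γ = if Init γ then 1 else 0 := by
  push Not at ht
  split_ifs with h
  · exact multOf_eq (.init h)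
  · exact multOf_eq (.noTurn h ht)

theorem Mv.initial (g : Good Δ Init) {γ γ₁ γ₂ : List Pt} {d : ℤ} {y : Pt} (m : Mv γ d y γ₁ γ₂)
    (hd : d = 0) (h : Init γ) : Init γ₂ := by
  obtain ⟨A, B, x, y, z⟩ := m
  exact g.init_swap _ _ _ _ _ h hd

theorem SS_succ (g : Good Δ Init) {n : ℕ} (hT : TT Δ Init (n + 1)) (hS : SS Δ Init n) :
    SS Δ Init (n + 1) := by
  intro γ y γ₁ γ₂ m hmu hinc
  obtain ⟨y', m'⟩ := m.symm
  rw [neg_zero] at m'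
  have hmu' := m.mu₀ rfl
  have hinc' := m.inc₂ hinc
  have i1 := m.par_inside g rfl hinc
  have i2 := m'.par_inside g rfl hinc'
  by_cases h1 : Inside Δ γ₁
  · have hin := i1.2 h1
    have hin' := i2.2 h1
    by_cases t : ∃ k, TurnAt sg γ k
    · exact S_turn' hT hS m t hmu hinc hin hin'
    by_cases t' : ∃ k, TurnAt sg γ₂ k
    · exact (S_turn' hT hS m' t' (by omega) hinc' hin' hin).symm
    have hI : Init γ ↔ Init γ₂ := ⟨m.initial g rfl, m'.initial g rfl⟩
    simp only [N, hin, hin', multOf_noTurn t, multOf_noTurn t', hI]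
  · simp [N, i1, i2, h1]

theorem TS (g : Good Δ Init) (n : ℕ) : TT Δ Init n ∧ SS Δ Init n := by
  induction n with
  | zero => exact ⟨fun _ _ _ _ _ _ h => by omega, fun _ _ _ _ _ h => by omega⟩
  | succ n ih =>
    have := TT_succ g ih.1 ih.2
    exact ⟨this, SS_succ g this ih.2⟩

theorem main_abs (g : Good Δ Init) (γ : List Pt) (hinc : Increasing γ) (hin : Inside Δ γ)
    (k : ℕ) (hk : TurnAt (fun x => 0 < x) γ k) :
    multOf Δ Init sg γ = triArea2 γ k * multOf Δ Init sg (cut γ k) +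
      (if Inside Δ (push γ k) then multOf Δ Init sg (push γ k) else 0) := by
  obtain ⟨A, x, y, z, B, e, ek, hd⟩ := turnAt_split hk
  subst e ek
  rw [cut_mk, push_mk, tri_mk]
  have m := Mv.mk A B x y z
  have h := (TS (Init := Init) g _).1 _ _ _ _ _ m (Nat.lt_succ_self _) hinc hd
    (fun _ => (m.inside_iff.1 hin).2)
  have hc := (m.inside_iff.1 hin).1
  have hd2 : ((det (y - x) (z - y)).natAbs : ℤ) = det (y - x) (z - y) :=
    Int.natAbs_of_nonneg (le_of_lt hd)
  unfold N at h
  rw [if_pos hin, if_pos hc] at h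
  zify
  rw [abs_of_pos hd, h]

end main

/-! ### The polygon -/

theorem polySet_conv (P : PolyData) (α β δ : ℤ) (u v w z : Pt) (hα : 0 ≤ α) (hβ : 0 ≤ β)
    (hδ : 0 ≤ δ) (hs : 0 < α + β + δ) (hu : u ∈ polySet P) (hv : v ∈ polySet P)
    (hw : w ∈ polySet P) (h1 : (α + β + δ) * z.1 = α * u.1 + β * v.1 + δ * w.1)
    (h2 : (α + β + δ) * z.2 = α * u.2 + β * v.2 + δ * w.2) : z ∈ polySet P := by
  unfold polySet at *
  simp only [Set.mem_ofPred_eq] at *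
  generalize hC : convexHull ℝ
    (toR '' {w | w ∈ chainPts P.p P.cw ∨ w ∈ chainPts P.p P.ccw}) = C at *
  have hconv : Convex ℝ C := hC ▸ convex_convexHull ℝ _
  have hs' : (0 : ℝ) < α + β + δ := by exact_mod_cast hs
  have hα' : (0 : ℝ) ≤ α := by exact_mod_cast hα
  have hβ' : (0 : ℝ) ≤ β := by exact_mod_cast hβ
  have hδ' : (0 : ℝ) ≤ δ := by exact_mod_cast hδ
  have h1' : ((α : ℝ) + β + δ) * z.1 = α * u.1 + β * v.1 + δ * w.1 := by exact_mod_cast h1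
  have h2' : ((α : ℝ) + β + δ) * z.2 = α * u.2 + β * v.2 + δ * w.2 := by exact_mod_cast h2
  have key := hconv.sum_mem (t := Finset.univ) (w := ![(α : ℝ) / (α + β + δ), β / (α + β + δ),
    δ / (α + β + δ)]) (z := ![toR u, toR v, toR w]) ?_ ?_ ?_
  · convert key using 1
    simp only [Fin.sum_univ_three, toR]
    ext
    · simp; field_simp; linarith
    · simp; field_simp; linarith
  · intro i _
    fin_cases i <;> simp <;> positivity
  · simp [Fin.sum_univ_three]; field_simp
  · intro i _
    fin_cases i <;> simp <;> assumption

theorem expand_cons_iff (e : Pt × Multiset ℕ) (es : List (Pt × Multiset ℕ)) (s : List Pt) :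
    ExpandChain (e :: es) s ↔ ∃ (l : List ℕ) (r : List Pt), (l : Multiset ℕ) = e.2 ∧
      ExpandChain es r ∧
      s = (l.map fun k : ℕ => (((k : ℤ) * e.1.1, (k : ℤ) * e.1.2) : Pt)) ++ r := by
  have key : ∀ l : List ℕ, (do let a ← l; pure (a : ℤ) : List ℤ) = l.map fun k : ℕ => (k : ℤ) := by
    intro l
    induction l with
    | nil => rfl
    | cons a l ih => simpa using ih
  simp only [ExpandChain, key, List.map_map]
  rfl

theorem expand_head {e : Pt × Multiset ℕ} {es : List (Pt × Multiset ℕ)} {b : Pt} {suf : List Pt}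
    (hpos : e.2 ≠ 0 ∧ ∀ k ∈ e.2, 0 < k) (h : ExpandChain (e :: es) (b :: suf)) :
    ∃ k : ℕ, 0 < k ∧ b = ((k : ℤ) * e.1.1, (k : ℤ) * e.1.2) := by
  obtain ⟨l, r, hl, -, hs⟩ := (expand_cons_iff _ _ _).1 h
  cases l with
  | nil => exact absurd hl.symm hpos.1
  | cons k l =>
    simp at hs
    exact ⟨k, hpos.2 k (by rw [← hl]; simp), hs.1⟩

theorem expand_pair : ∀ (chain : List (Pt × Multiset ℕ))
    (_ : ∀ e ∈ chain, e.2 ≠ 0 ∧ ∀ k ∈ e.2, 0 < k)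
    (_ : (chain.map Prod.fst).IsChain fun u v => det u v < 0)
    (pre : List Pt) (a b : Pt) (suf : List Pt), ExpandChain chain (pre ++ a :: b :: suf) →
    det a b < 0 ∨ (det a b = 0 ∧ ExpandChain chain (pre ++ b :: a :: suf))
  | [], _, _, pre, a, b, suf, h => by simp [ExpandChain] at h
  | e :: es, hpos, hconv, pre, a, b, suf, h => by
    rw [expand_cons_iff] at h ⊢
    obtain ⟨l, r, hl, hr, hs⟩ := h
    have ih := expand_pair es (fun e he => hpos e (by simp [he]))
      (by simp only [List.map_cons] at hconv; exact hconv.of_cons)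
    rcases List.append_eq_append_iff.1 hs with ⟨C, h1, h2⟩ | ⟨C, h1, h2⟩
    · have _triv := True.intro
      rcases C with _ | ⟨c1, _ | ⟨c2, C⟩⟩
      · simp at h1 h2
        rw [← h2] at hr
        rcases ih [] a b suf hr with h | ⟨h, h'⟩
        · exact Or.inl h
        · exact Or.inr ⟨h, l, _, hl, h', by rw [← h1]; simp⟩
      · simp at h2
        obtain ⟨rfl, rfl⟩ := h2
        left
        have ha : a ∈ l.map fun k : ℕ => ((k : ℤ) * e.1.1, (k : ℤ) * e.1.2) := by rw [h1]; simp
        obtain ⟨k, hk, rfl⟩ := List.mem_map.1 ha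
        have hk0 : 0 < k := (hpos e (by simp)).2 k (by rw [← hl]; simpa using hk)
        cases es with
        | nil => simp [ExpandChain] at hr
        | cons e' es' =>
          obtain ⟨k', hk', rfl⟩ := expand_head (hpos e' (by simp)) hr
          have hd : det e.1 e'.1 < 0 := by
            simp only [List.map_cons, List.isChain_cons_cons] at hconv; exact hconv.1
          have : det ((k : ℤ) * e.1.1, (k : ℤ) * e.1.2) ((k' : ℤ) * e'.1.1, (k' : ℤ) * e'.1.2) =
              (k * k') * det e.1 e'.1 := by simp only [det]; ring
          rw [this]
          exact mul_neg_of_pos_of_neg (by positivity) hd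
      · simp at h2
        obtain ⟨rfl, rfl, rfl⟩ := h2
        right
        rw [List.map_eq_append_iff] at h1
        obtain ⟨l1, l2, rfl, rfl, h3⟩ := h1
        rw [List.map_eq_cons_iff] at h3
        obtain ⟨k1, l3, rfl, rfl, h4⟩ := h3
        rw [List.map_eq_cons_iff] at h4
        obtain ⟨k2, l4, rfl, rfl, rfl⟩ := h4
        refine ⟨by simp only [det]; ring, l1 ++ k2 :: k1 :: l4, r, ?_, hr, by simp⟩
        rw [← hl, Multiset.coe_eq_coe]
        exact List.Perm.append_left _ (List.Perm.swap _ _ _)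
    · subst h1
      rw [h2] at hr
      rcases ih C a b suf hr with h | ⟨h, h'⟩
      · exact Or.inl h
      · exact Or.inr ⟨h, l, _, hl, h', by simp⟩

theorem path_split : ∀ (A : List Pt) (p : Pt) (s : List Pt) (x y z : Pt) (B : List Pt),
    pathFrom p s = A ++ x :: y :: z :: B → ∃ pre suf, s = pre ++ (y - x) :: (z - y) :: suf ∧
      pathFrom p (pre ++ (z - y) :: (y - x) :: suf) = A ++ x :: (x + z - y) :: z :: B
  | [], p, [], x, y, z, B, h => by simp [pathFrom] at h
  | [], p, [u], x, y, z, B, h => by simp [pathFrom] at h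
  | [], p, u :: v :: s, x, y, z, B, h => by
    refine ⟨[], s, ?_⟩
    cases s with
    | nil =>
      simp [pathFrom] at h
      obtain ⟨rfl, rfl, rfl, rfl⟩ := h
      simp [pathFrom]; abel_nf; simp
    | cons w s =>
      simp [pathFrom] at h
      obtain ⟨rfl, rfl, rfl, rfl⟩ := h
      have e1 : p + v + u = p + u + v := by abel
      have e2 : p + (p + u + v) - (p + u) = p + v := by abel
      simp [pathFrom, e1, e2]
  | a :: A, p, [], x, y, z, B, h => by simp [pathFrom] at h
  | a :: A, p, u :: s, x, y, z, B, h => by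
    simp [pathFrom] at h
    obtain ⟨rfl, h⟩ := h
    obtain ⟨pre, suf, h1, h2⟩ := path_split A _ s x y z B h
    exact ⟨u :: pre, suf, by simp [h1], by simp [pathFrom, h2]⟩

theorem good_poly (P : PolyData) : Good (polySet P) (InitChain P.p P.cw) where
  conv := polySet_conv P
  init_turn := by
    rintro A x y z B ⟨s, hs, he⟩
    obtain ⟨pre, suf, rfl, -⟩ := path_split A _ s x y z B he.symm
    rcases expand_pair P.cw P.cw_pos P.cw_conv _ _ _ _ hs with h | ⟨h, -⟩ <;> omega
  init_swap := by
    rintro A x y z B ⟨s, hs, he⟩ hd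
    obtain ⟨pre, suf, rfl, h2⟩ := path_split A _ s x y z B he.symm
    rcases expand_pair P.cw P.cw_pos P.cw_conv _ _ _ _ hs with h | ⟨-, h⟩
    · omega
    · exact ⟨_, h, h2.symm⟩

/-- The positive multiplicity recursion may be performed at *any* left
turn, not necessarily the first one. -/
theorem multPlus_any_left_turn (P : PolyData) (γ : List Pt)
    (hinc : Increasing γ)
    (hfrom : γ.head? = some P.p) (hto : γ.getLast? = some P.q)
    (hin : Inside (polySet P) γ)
    (hninit : ¬InitChain P.p P.cw γ)
    (k : ℕ) (hk : TurnAt (fun x => 0 < x) γ k) :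
    multPlusP P γ = triArea2 γ k * multPlusP P (cut γ k) +
      (if Inside (polySet P) (push γ k) then multPlusP P (push γ k) else 0) := by
  exact main_abs (good_poly P) γ hinc hin k hk

end TropPaths
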